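/- Let (α;β) and (α';β') be upper-left weak bicompositions. Then every bicomposition occurring in the quasi-shuffle product (α;β)*(α';β'), taken over the monoid ℕ×ℕ with componentwise addition and viewing a bicomposition as the list of its columns, is again upper-left weak, and M̂_{(α;β)} · M̂_{(α';β')} = M̂_{(α;β)*(α';β')} in ℚ[[X]], where M̂ is extended ℚ-linearly to linear combinations of upper-left weak bicompositions. In particular, the ℚ-linear span of the Stirling left weak quasisymmetric functions is a subalgebra of ℚ[[X]]. -/

import Mathlib

open Finset

/-- quasi-shuffle product on the free ℚ-module on lists over an additive commutative monoid -/
noncomputable def qsh {A : Type} [AddCommMonoid A] : List A → List A → (List A →₀ ℚ)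
  | [], b => Finsupp.single b 1
  | a :: a', [] => Finsupp.single (a :: a') 1
  | a :: a', b :: b' =>
      (qsh a' (b :: b')).mapDomain (a :: ·) +
      (qsh (a :: a') b').mapDomain (b :: ·) +
      (qsh a' b').mapDomain ((a + b) :: ·)
termination_by a b => a.length + b.length

/-- an upper-left weak bicomposition (a list of columns whose first-row list is left weak) -/
def UpperLeftWeak (c : List (ℕ × ℕ)) : Prop := ∀ p : ℕ × ℕ, c.getLast? = some p → 0 < p.1

/-- the Stirling left weak quasisymmetric function M̂_{(α;β)} of a bicomposition (list of
columns): its coefficient at a monomial μ is the (finite, for upper-left weak bicompositions)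
sum of I^β over all strictly increasing tuples I with x_I^α = μ. -/
noncomputable def stirM (c : List (ℕ × ℕ)) : MvPowerSeries ℕ+ ℚ :=
  fun μ => ∑ᶠ I ∈ {I : Fin c.length → ℕ+ | StrictMono I ∧
      (∑ j, Finsupp.single (I j) (c.get j).1) = μ},
    ∏ j, (((I j : ℕ) : ℚ) ^ (c.get j).2)


lemma ULW_cons (a : ℕ × ℕ) (d : List (ℕ × ℕ)) :
    UpperLeftWeak (a :: d) ↔ (d = [] → 0 < a.1) ∧ UpperLeftWeak d := by
  cases d with
  | nil => simp [UpperLeftWeak]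
  | cons b d => simp [UpperLeftWeak, List.getLast?_cons_cons]

lemma qsh_support (c c' : List (ℕ × ℕ)) : ∀ d ∈ (qsh c c').support,
    (d = [] → c = [] ∧ c' = []) ∧ (UpperLeftWeak c → UpperLeftWeak c' → UpperLeftWeak d) := by
  classical
  fun_induction qsh c c' with
  | case1 b =>
    intro d hd
    have := Finsupp.support_single_subset hd
    simp only [Finset.mem_singleton] at this
    subst this
    simp
  | case2 a a' =>
    intro d hd
    have := Finsupp.support_single_subset hd
    simp only [Finset.mem_singleton] at this
    subst this
    exact ⟨by simp, fun h _ => h⟩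
  | case3 a a' b b' ih1 ih2 ih3 =>
    intro d hd
    rcases Finset.mem_union.1 (Finsupp.support_add hd) with hd | hd
    · rcases Finset.mem_union.1 (Finsupp.support_add hd) with hd | hd
      · obtain ⟨e, he, rfl⟩ := Finset.mem_image.1 (Finsupp.mapDomain_support hd)
        have := ih1 e he
        simp only [ULW_cons] at this ⊢
        grind
      · obtain ⟨e, he, rfl⟩ := Finset.mem_image.1 (Finsupp.mapDomain_support hd)
        have := ih2 e he
        simp only [ULW_cons] at this ⊢
        grind
    · obtain ⟨e, he, rfl⟩ := Finset.mem_image.1 (Finsupp.mapDomain_support hd)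
      have := ih3 e he
      simp only [ULW_cons, Prod.fst_add] at this ⊢
      grind

/-- weight of a column at a variable -/
noncomputable def wgt (i : ℕ+) (a : ℕ × ℕ) : MvPowerSeries ℕ+ ℚ :=
  MvPowerSeries.monomial (Finsupp.single i a.1) (((i : ℕ) : ℚ) ^ a.2)

lemma wgt_add (i : ℕ+) (a b : ℕ × ℕ) : wgt i (a + b) = wgt i a * wgt i b := by
  simp [wgt, MvPowerSeries.monomial_mul_monomial, Finsupp.single_add, pow_add]

/-- truncated sum, over a list of variables -/
noncomputable def tr : List ℕ+ → List (ℕ × ℕ) → MvPowerSeries ℕ+ ℚ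
  | _, [] => 1
  | [], _ :: _ => 0
  | i :: l, a :: c => wgt i a * tr l c + tr l (a :: c)

/-- linear extension -/
noncomputable def trL (l : List ℕ+) : (List (ℕ × ℕ) →₀ ℚ) →ₗ[ℚ] MvPowerSeries ℕ+ ℚ :=
  Finsupp.linearCombination ℚ (tr l)

lemma tr_nil (l : List ℕ+) : tr l [] = 1 := by cases l <;> simp [tr]

lemma trL_nil_cons (a : ℕ × ℕ) (x : List (ℕ × ℕ) →₀ ℚ) :
    trL [] (x.mapDomain (a :: ·)) = 0 := by
  simp only [trL, Finsupp.linearCombination_mapDomain]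
  simp [Finsupp.linearCombination_apply, tr]

lemma trL_cons_cons (i : ℕ+) (l : List ℕ+) (a : ℕ × ℕ) (x : List (ℕ × ℕ) →₀ ℚ) :
    trL (i :: l) (x.mapDomain (a :: ·)) = wgt i a * trL l x + trL l (x.mapDomain (a :: ·)) := by
  simp only [trL, Finsupp.linearCombination_mapDomain]
  simp [Finsupp.linearCombination_apply, tr, Finsupp.sum, Finset.mul_sum,
    Finset.sum_add_distrib, smul_add]

lemma tr_mul (l : List ℕ+) : ∀ c c' : List (ℕ × ℕ), tr l c * tr l c' = trL l (qsh c c') := by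
  induction l with
  | nil =>
    intro c c'
    cases c with
    | nil => simp [qsh, trL, tr_nil]
    | cons a c =>
      cases c' with
      | nil => simp [qsh, trL, tr_nil]
      | cons b c' => simp only [qsh, map_add, trL_nil_cons]; simp [tr]
  | cons i l ih =>
    intro c c'
    cases c with
    | nil => simp [qsh, trL, tr_nil]
    | cons a c =>
      cases c' with
      | nil => simp [qsh, trL, tr_nil]
      | cons b c' =>
        have h := ih (a :: c) (b :: c')
        simp only [qsh, map_add] at h
        simp only [qsh, map_add, trL_cons_cons, ← ih, wgt_add]
        simp only [tr]
        linear_combination h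

/-- strictly increasing tuples in a list -/
noncomputable def G (l : List ℕ+) (k : ℕ) : Finset (Fin k → ℕ+) :=
  open Classical in (Fintype.piFinset fun _ => l.toFinset).filter StrictMono

lemma mem_G (l : List ℕ+) (k : ℕ) (I : Fin k → ℕ+) :
    I ∈ G l k ↔ (∀ j, I j ∈ l) ∧ StrictMono I := by
  simp [G]

lemma G_sum {M : Type*} [AddCommMonoid M] (i : ℕ+) (l : List ℕ+) (hl : ∀ x ∈ l, i < x) (k : ℕ)
    (f : (Fin (k+1) → ℕ+) → M) :
    ∑ I ∈ G (i :: l) (k+1), f I =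
      ∑ J ∈ G l k, f (Fin.cons i J) + ∑ I ∈ G l (k+1), f I := by
  classical
  rw [← Finset.sum_filter_add_sum_filter_not (G (i :: l) (k+1)) (fun I => I 0 = i)]
  congr 1
  · symm
    refine Finset.sum_nbij' (fun J => Fin.cons i J) (fun I => Fin.tail I) ?_ ?_ ?_ ?_ ?_
    · intro J hJ
      rw [mem_G] at hJ
      simp only [Finset.mem_filter, mem_G, Fin.cons_zero, and_true]
      refine ⟨fun j => ?_, ?_⟩
      · refine Fin.cases ?_ (fun j => ?_) j
        · simp
        · simp [hJ.1 j]
      · intro x y hxy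
        induction x using Fin.cases with
        | zero =>
          induction y using Fin.cases with
          | zero => exact absurd hxy (lt_irrefl _)
          | succ y => simpa using hl _ (hJ.1 y)
        | succ x =>
          induction y using Fin.cases with
          | zero => exact absurd hxy (Fin.not_lt_zero _)
          | succ y => simpa using hJ.2 (Fin.succ_lt_succ_iff.1 hxy)
    · intro I hI
      simp only [Finset.mem_filter, mem_G] at hI
      rw [mem_G]
      obtain ⟨⟨h1, h2⟩, h3⟩ := hI
      refine ⟨fun j => ?_, fun x y hxy => h2 (Fin.succ_lt_succ_iff.2 hxy)⟩
      have h4 : I 0 < I j.succ := h2 (Fin.succ_pos j)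
      rcases List.mem_cons.1 (h1 j.succ) with h | h
      · rw [h, h3] at h4; exact absurd h4 (lt_irrefl _)
      · exact h
    · intro J _; simp
    · intro I hI
      have := (Finset.mem_filter.1 hI).2
      rw [← this]; exact Fin.cons_self_tail I
    · intro J _; rfl
  · apply Finset.sum_congr _ (fun _ _ => rfl)
    ext I
    simp only [Finset.mem_filter, mem_G]
    constructor
    · rintro ⟨⟨h1, h2⟩, h3⟩
      refine ⟨fun j => ?_, h2⟩
      have h0 : I 0 ∈ l := (List.mem_cons.1 (h1 0)).resolve_left h3
      have h4 : I 0 ≤ I j := h2.monotone (Fin.zero_le j)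
      exact (List.mem_cons.1 (h1 j)).resolve_left ((hl _ h0).trans_le h4).ne'
    · rintro ⟨h1, h2⟩
      exact ⟨⟨fun j => List.mem_cons_of_mem _ (h1 j), h2⟩, (hl _ (h1 0)).ne'⟩

lemma tr_eq (l : List ℕ+) (hl : l.Pairwise (· < ·)) : ∀ c : List (ℕ × ℕ),
    tr l c = ∑ I ∈ G l c.length, ∏ j, wgt (I j) (c.get j) := by
  induction l with
  | nil =>
    intro c
    cases c with
    | nil =>
      have : G [] 0 = {Fin.elim0} := by
        ext I; simp [mem_G, Subsingleton.elim I Fin.elim0, Subsingleton.strictMono]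
      simp [tr, this]
    | cons a c =>
      have : G [] (a :: c).length = ∅ := by
        ext I; simp [mem_G]
      rw [this]; simp [tr]
  | cons i l ih =>
    intro c
    rw [List.pairwise_cons] at hl
    cases c with
    | nil =>
      have : G (i :: l) 0 = {Fin.elim0} := by
        ext I; simp [mem_G, Subsingleton.elim I Fin.elim0, Subsingleton.strictMono]
      simp [tr, this]
    | cons a c =>
      have := G_sum i l hl.1 c.length
        (fun I => ∏ j : Fin (c.length + 1), wgt (I j) ((a :: c).get j))
      refine Eq.trans ?_ this.symm
      rw [tr, ih hl.2, ih hl.2, Finset.mul_sum]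
      congr 1
      apply Finset.sum_congr rfl
      intro J _
      rw [Fin.prod_univ_succ]
      simp

lemma prod_wgt {k : ℕ} (s : Finset (Fin k)) (I : Fin k → ℕ+) (g : Fin k → ℕ × ℕ) :
    ∏ j ∈ s, wgt (I j) (g j) = MvPowerSeries.monomial (∑ j ∈ s, Finsupp.single (I j) (g j).1)
      (∏ j ∈ s, (((I j : ℕ) : ℚ) ^ (g j).2)) := by
  classical
  induction s using Finset.induction_on with
  | empty => simp [MvPowerSeries.monomial_zero_one]
  | insert x s hx ih =>
    rw [Finset.prod_insert hx, Finset.prod_insert hx, Finset.sum_insert hx, ih, wgt,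
      MvPowerSeries.monomial_mul_monomial]

lemma coeff_stirM (l : List ℕ+) (hl : l.Pairwise (· < ·)) (c : List (ℕ × ℕ))
    (hc : UpperLeftWeak c) (μ : ℕ+ →₀ ℕ) (hμ : ∀ i ∈ μ.support, ∀ j ≤ i, j ∈ l) :
    MvPowerSeries.coeff μ (stirM c) = MvPowerSeries.coeff μ (tr l c) := by
  classical
  rw [tr_eq l hl, map_sum]
  simp only [prod_wgt, MvPowerSeries.coeff_monomial]
  rw [← Finset.sum_filter]
  change ∑ᶠ I ∈ {I : Fin c.length → ℕ+ | StrictMono I ∧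
      (∑ j, Finsupp.single (I j) (c.get j).1) = μ},
    ∏ j, (((I j : ℕ) : ℚ) ^ (c.get j).2) = _
  rw [← finsum_mem_coe_finset]
  refine finsum_mem_congr ?_ (fun _ _ => rfl)
  · ext I
    simp only [Finset.coe_filter, Set.mem_setOf_eq, mem_G]
    constructor
    · rintro ⟨h1, h2⟩
      refine ⟨⟨fun j => ?_, h1⟩, h2.symm⟩
      have hpos : 0 < c.length := j.pos
      set m : Fin c.length := ⟨c.length - 1, by omega⟩ with hm
      have hlast : 0 < (c.get m).1 := by
        apply hc
        rw [List.getLast?_eq_getElem?, List.getElem?_eq_getElem (by omega)]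
        rfl
      refine hμ (I m) ?_ _ (h1.monotone ?_)
      · rw [Finsupp.mem_support_iff, ← h2, Finsupp.finset_sum_apply]
        apply ne_of_gt
        refine lt_of_lt_of_le ?_ (Finset.single_le_sum (fun _ _ => Nat.zero_le _)
          (Finset.mem_univ m))
        simpa using hlast
      · rw [Fin.le_def]; simp only [hm]; omega
    · rintro ⟨⟨_, h1⟩, h2⟩
      exact ⟨h1, h2.symm⟩

lemma stirM_mul (c c' : List (ℕ × ℕ))
    (hc : UpperLeftWeak c) (hc' : UpperLeftWeak c') :
    stirM c * stirM c' = (qsh c c').sum fun d q => q • stirM d := by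
  classical
  ext μ
  obtain ⟨N, hN⟩ : ∃ N, ∀ i ∈ μ.support, i ≤ N :=
    ⟨μ.support.sup id ⊔ 1, fun i hi => le_sup_of_le_left (Finset.le_sup (f := id) hi)⟩
  set l : List ℕ+ := (Finset.Icc 1 N).sort (· ≤ ·) with hl
  have hlp : l.Pairwise (· < ·) := (Finset.sortedLT_sort _).pairwise
  have hmem : ∀ ν ≤ μ, ∀ i ∈ ν.support, ∀ j ≤ i, j ∈ l := by
    intro ν hν i hi j hj
    rw [hl, Finset.mem_sort, Finset.mem_Icc]
    exact ⟨PNat.one_le j, hj.trans (hN i (Finsupp.support_mono hν hi))⟩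
  have key : MvPowerSeries.coeff μ (stirM c * stirM c') =
      MvPowerSeries.coeff μ (tr l c * tr l c') := by
    rw [MvPowerSeries.coeff_mul, MvPowerSeries.coeff_mul]
    apply Finset.sum_congr rfl
    intro p hp
    rw [Finset.HasAntidiagonal.mem_antidiagonal] at hp
    rw [coeff_stirM l hlp c hc p.1 (hmem _ (hp ▸ le_self_add)),
      coeff_stirM l hlp c' hc' p.2 (hmem _ (hp ▸ le_add_self))]
  rw [key, tr_mul, trL, Finsupp.linearCombination_apply, Finsupp.sum, Finsupp.sum, map_sum, map_sum]
  apply Finset.sum_congr rfl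
  intro d hd
  rw [MvPowerSeries.coeff_smul, MvPowerSeries.coeff_smul,
    coeff_stirM l hlp d ((qsh_support c c' d hd).2 hc hc') μ (hmem _ le_rfl)]

theorem stmt3 (c c' : List (ℕ × ℕ))
    (hc : UpperLeftWeak c) (hc' : UpperLeftWeak c') :
    ((∀ d ∈ (qsh c c').support, UpperLeftWeak d) ∧
      stirM c * stirM c' = (qsh c c').sum fun d q => q • stirM d) ∧
    (∀ f g : MvPowerSeries ℕ+ ℚ,
      f ∈ Submodule.span ℚ {F : MvPowerSeries ℕ+ ℚ | ∃ d, UpperLeftWeak d ∧ F = stirM d} →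
      g ∈ Submodule.span ℚ {F : MvPowerSeries ℕ+ ℚ | ∃ d, UpperLeftWeak d ∧ F = stirM d} →
      f * g ∈ Submodule.span ℚ {F : MvPowerSeries ℕ+ ℚ | ∃ d, UpperLeftWeak d ∧ F = stirM d}) := by
  refine ⟨⟨fun d hd => (qsh_support c c' d hd).2 hc hc', stirM_mul c c' hc hc'⟩, ?_⟩
  intro f g hf hg
  have h := Submodule.mul_mem_mul hf hg
  rw [Submodule.span_mul_span] at h
  refine Submodule.span_le.2 ?_ h
  rintro _ ⟨_, ⟨d, hd, rfl⟩, _, ⟨e, he, rfl⟩, rfl⟩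
  simp only [SetLike.mem_coe]
  rw [stirM_mul d e hd he]
  refine Submodule.sum_mem _ fun x hx => Submodule.smul_mem _ _ (Submodule.subset_span ?_)
  exact ⟨x, (qsh_support d e x hx).2 hd he, rfl⟩
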